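/- There exist a constant C > 0 and λ₀ ∈ (0,1] such that for all λ ∈ (0,λ₀) and all (x,p) ∈ ℝ², A_λ^−(x,p) ≤ |D_λ(p)|; in particular, for all p with |p| ≤ λ^{−1} one has A_λ^−(x,p) ≤ C·λ|p|. -/

import Mathlib

open MeasureTheory Real

/-- Standard Gaussian density. -/
noncomputable def gauss (q : ℝ) : ℝ := (Real.sqrt (2 * Real.pi))⁻¹ * Real.exp (-q ^ 2 / 2)

/-- The constant η = (1/16)·√(π/2). -/
noncomputable def eta : ℝ := (1 / 16) * Real.sqrt (Real.pi / 2)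

/-- Collision jump-rate kernel. -/
noncomputable def Jker (lam p p' : ℝ) : ℝ :=
  (eta * (1 + lam) / 2) * |p' - p| * gauss (((1 - lam) / 2) * p' - ((1 + lam) / 2) * p)

/-- Escape rate. -/
noncomputable def Esc (lam p : ℝ) : ℝ := ∫ p' : ℝ, Jker lam p p'

/-- The Hamiltonian H(x,p) = p²/2 + V(x). -/
noncomputable def Ham (V : ℝ → ℝ) (x p : ℝ) : ℝ := p ^ 2 / 2 + V x

/-- A_λ(x,p): expected jump of √2·H^{1/2} under the kernel. -/
noncomputable def Afun (V : ℝ → ℝ) (lam x p : ℝ) : ℝ :=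
  ∫ p' : ℝ,
    (Real.sqrt 2 * Real.sqrt (Ham V x p') - Real.sqrt 2 * Real.sqrt (Ham V x p)) *
      Jker lam p p'

/-- Drift rate. -/
noncomputable def Drift (lam p : ℝ) : ℝ := ∫ p' : ℝ, (p' - p) * Jker lam p p'

open ProbabilityTheory

/-!
For `c = 2 * V x` the map `p ↦ √(p ^ 2 + c)` is convex and 1-Lipschitz, so it lies above its
tangent at `p`, whose slope `m` satisfies `|m| ≤ 1`. Integrating against the nonnegative kernel
gives `m * Drift lam p ≤ Afun V lam x p`, and hence the bound by `|Drift lam p|`. Substituting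
`v = (1 - lam) / 2 * p' - (1 + lam) / 2 * p` turns the drift into a multiple of the mean of
`(Z + a) * |Z + a|`, where `Z` is standard normal and `a = lam * p`. This mean vanishes at `a = 0`
by symmetry, and is `O(a)` for `|a| ≤ 1` because `y ↦ y * |y|` is locally Lipschitz.
-/

lemma abs_add_mul_abs_add_sub_le (v a : ℝ) :
    abs ((v + a) * |v + a| - v * |v|) ≤ |a| * (2 * |v| + |a|) := by
  have h_abs : abs (|v + a| - |v|) ≤ |a| := by simpa using abs_abs_sub_abs_le (v + a) v
  calc abs ((v + a) * |v + a| - v * |v|) = abs ((v + a) * (|v + a| - |v|) + a * |v|) := by ring_nf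
    _ ≤ |v + a| * abs (|v + a| - |v|) + |a| * |v| := by
      simpa only [abs_mul, abs_abs] using abs_add_le ((v + a) * (|v + a| - |v|)) (a * |v|)
    _ ≤ (|v| + |a|) * |a| + |a| * |v| := by
      gcongr
      exact abs_add_le v a
    _ = |a| * (2 * |v| + |a|) := by ring

lemma integral_eq_zero_of_odd {G E : Type*} [MeasurableSpace G] [AddGroup G] [MeasurableNeg G]
    [NormedAddCommGroup E] [NormedSpace ℝ E] {μ : Measure G} [μ.IsNegInvariant] {f : G → E}
    (hf : Function.Odd f) : ∫ v, f v ∂μ = 0 := by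
  have h_neg : -∫ v, f v ∂μ = ∫ v, f v ∂μ := by
    rw [← integral_neg, ← integral_neg_eq_self f μ]
    simp only [hf _]
  have : IsAddTorsionFree E := .of_isTorsionFree ℝ E
  exact neg_eq_self.1 h_neg

lemma neg_integral_le_abs_integral_of_mul_le {α : Type*} [MeasurableSpace α] {μ : Measure α}
    {f g : α → ℝ} {m : ℝ} (hf : Integrable f μ) (hg : Integrable g μ) (hm : |m| ≤ 1)
    (hfg : ∀ᵐ a ∂μ, m * f a ≤ g a) : -∫ a, g a ∂μ ≤ |∫ a, f a ∂μ| :=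
  calc -∫ a, g a ∂μ ≤ -(m * ∫ a, f a ∂μ) := by
        rw [← integral_const_mul]
        exact neg_le_neg (integral_mono_ae (hf.const_mul m) hg hfg)
    _ ≤ |m| * |∫ a, f a ∂μ| := by
        rw [← abs_mul]
        exact neg_le_abs _
    _ ≤ |∫ a, f a ∂μ| := mul_le_of_le_one_left (abs_nonneg _) hm

section SymmetricMeasure

variable {μ : Measure ℝ}

lemma integrable_add_mul_abs_add [IsFiniteMeasure μ] (hμ : MemLp id 2 μ) (a : ℝ) :
    Integrable (fun v => (v + a) * |v + a|) μ :=
  have h : MemLp (fun v => v + a) 2 μ := hμ.add (memLp_const a)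
  h.integrable_mul h.abs

lemma abs_integral_add_mul_abs_add_le [IsProbabilityMeasure μ] [μ.IsNegInvariant]
    (hμ : MemLp id 2 μ) (a : ℝ) :
    |∫ v, (v + a) * |v + a| ∂μ| ≤ |a| * (2 * ∫ v, |v| ∂μ + |a|) := by
  have h_abs : Integrable (fun v => |v|) μ := (hμ.integrable one_le_two).abs
  have h_zero : Integrable (fun v => v * |v|) μ := by
    simpa only [add_zero] using integrable_add_mul_abs_add hμ 0
  have h_symm : ∫ v, v * |v| ∂μ = 0 :=
    integral_eq_zero_of_odd fun v => by rw [abs_neg, neg_mul]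
  calc |∫ v, (v + a) * |v + a| ∂μ| = |∫ v, ((v + a) * |v + a| - v * |v|) ∂μ| := by
        rw [integral_sub (integrable_add_mul_abs_add hμ a) h_zero, h_symm, sub_zero]
    _ ≤ ∫ v, |a| * (2 * |v| + |a|) ∂μ := by
        rw [← norm_eq_abs]
        exact norm_integral_le_of_norm_le
          (((h_abs.const_mul 2).add (integrable_const |a|)).const_mul |a|)
          (ae_of_all _ fun v => abs_add_mul_abs_add_sub_le v a)
    _ = |a| * (2 * ∫ v, |v| ∂μ + |a|) := by
        rw [integral_const_mul, integral_add (h_abs.const_mul 2) (integrable_const _),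
          integral_const_mul, integral_const, probReal_univ, one_smul]

end SymmetricMeasure

section SqrtSqAdd

variable {c : ℝ}

lemma abs_div_sqrt_sq_add_le_one (hc : 0 ≤ c) (p : ℝ) : |p / √(p ^ 2 + c)| ≤ 1 := by
  rw [abs_div, abs_of_nonneg (sqrt_nonneg _)]
  exact div_le_one_of_le₀ (abs_le_sqrt (by linarith)) (sqrt_nonneg _)

lemma mul_add_le_sqrt_sq_add_mul_sqrt_sq_add (hc : 0 ≤ c) (p q : ℝ) :
    p * q + c ≤ √(p ^ 2 + c) * √(q ^ 2 + c) := by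
  rw [← sqrt_mul (by positivity)]
  exact le_sqrt_of_sq_le (by nlinarith [mul_nonneg hc (sq_nonneg (p - q))])

lemma div_sqrt_mul_sub_le_sqrt_sq_add_sub (hc : 0 ≤ c) (p q : ℝ) :
    p / √(p ^ 2 + c) * (q - p) ≤ √(q ^ 2 + c) - √(p ^ 2 + c) := by
  rcases (sqrt_nonneg (p ^ 2 + c)).eq_or_lt with h_zero | h_pos
  · simp [← h_zero]
  · rw [div_mul_eq_mul_div, div_le_iff₀ h_pos, sub_mul, mul_self_sqrt (by positivity)]
    linarith [mul_add_le_sqrt_sq_add_mul_sqrt_sq_add hc p q]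

lemma abs_sqrt_sq_add_sub_le (hc : 0 ≤ c) (p q : ℝ) :
    |√(q ^ 2 + c) - √(p ^ 2 + c)| ≤ |q - p| := by
  have h_norm (y : ℝ) : √(y ^ 2 + c) = ‖(y + √c * Complex.I : ℂ)‖ := by
    rw [Complex.norm_add_mul_I, sq_sqrt hc]
  rw [h_norm, h_norm]
  refine (abs_norm_sub_norm_le _ _).trans_eq ?_
  rw [add_sub_add_right_eq_sub, ← Complex.ofReal_sub, Complex.norm_real, norm_eq_abs]

end SqrtSqAdd

section StandardNormal

instance isNegInvariant_gaussianReal_zero (v : NNReal) : (gaussianReal 0 v).IsNegInvariant :=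
  ⟨gaussianReal_map_neg.trans (by rw [neg_zero])⟩

lemma integral_abs_gaussianReal_le_one : ∫ v, |v| ∂gaussianReal 0 1 ≤ 1 := by
  have h_mem : MemLp id 2 (gaussianReal 0 1) := memLp_id_gaussianReal 2
  have h_sq : Integrable (fun v : ℝ => v ^ 2) (gaussianReal 0 1) := h_mem.integrable_sq
  have h_moment : ∫ v, v ^ 2 ∂gaussianReal 0 1 = 1 := by
    simpa using (variance_of_integral_eq_zero measurable_id.aemeasurable
      integral_id_gaussianReal).symm.trans (variance_id_gaussianReal (μ := 0) (v := 1))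
  calc ∫ v, |v| ∂gaussianReal 0 1 ≤ ∫ v, (v ^ 2 + 1) / 2 ∂gaussianReal 0 1 :=
        integral_mono (h_mem.integrable one_le_two).abs
          ((h_sq.add (integrable_const 1)).div_const 2)
          fun v => by nlinarith [sq_nonneg (|v| - 1), sq_abs v]
    _ = 1 := by
        rw [integral_div, integral_add h_sq (integrable_const 1), h_moment]
        norm_num

lemma gauss_eq_gaussianPDFReal : gauss = gaussianPDFReal 0 1 := by
  ext q
  simp [gauss, gaussianPDFReal]

lemma integrable_gauss_mul_iff {f : ℝ → ℝ} :
    Integrable (fun v => gauss v * f v) ↔ Integrable f (gaussianReal 0 1) := by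
  rw [gaussianReal_of_var_ne_zero 0 one_ne_zero, integrable_withDensity_iff_integrable_smul'
    (measurable_gaussianPDF 0 1) (ae_of_all _ fun _ => gaussianPDF_lt_top)]
  simp only [toReal_gaussianPDF, gauss_eq_gaussianPDFReal, smul_eq_mul]

lemma integral_gauss_mul (f : ℝ → ℝ) : ∫ v, gauss v * f v = ∫ v, f v ∂gaussianReal 0 1 := by
  rw [integral_gaussianReal_eq_integral_smul one_ne_zero, gauss_eq_gaussianPDFReal]
  rfl

end StandardNormal

section Drift

lemma eta_pos : 0 < eta := by
  unfold eta
  positivity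

lemma gauss_nonneg (q : ℝ) : 0 ≤ gauss q := by
  unfold gauss
  positivity

lemma Jker_nonneg {lam : ℝ} (hlam : -1 ≤ lam) (p q : ℝ) : 0 ≤ Jker lam p q :=
  mul_nonneg (mul_nonneg (div_nonneg (mul_nonneg eta_pos.le (by linarith)) zero_le_two)
    (abs_nonneg _)) (gauss_nonneg _)

lemma continuous_Jker (lam p : ℝ) : Continuous (Jker lam p) := by
  unfold Jker gauss
  fun_prop

lemma sub_mul_Jker {lam : ℝ} (hlam : lam ≠ 1) (p q : ℝ) :
    let v := (1 - lam) / 2 * q - (1 + lam) / 2 * p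
    (q - p) * Jker lam p q = eta * (1 + lam) / 2 / ((1 - lam) / 2 * |(1 - lam) / 2|) *
      (gauss v * ((v + lam * p) * |v + lam * p|)) := by
  intro v
  have hc : (1 - lam) / 2 ≠ 0 := div_ne_zero (sub_ne_zero.2 hlam.symm) two_ne_zero
  have hv : v + lam * p = (1 - lam) / 2 * (q - p) := by ring
  rw [hv, abs_mul, Jker]
  have h_abs := abs_ne_zero.2 hc
  generalize gauss v = g
  field_simp

lemma integrable_sub_mul_Jker {lam : ℝ} (hlam : lam ≠ 1) (p : ℝ) :
    Integrable (fun q => (q - p) * Jker lam p q) := by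
  have hc : (1 - lam) / 2 ≠ 0 := div_ne_zero (sub_ne_zero.2 hlam.symm) two_ne_zero
  have h := integrable_gauss_mul_iff.2
    (integrable_add_mul_abs_add (memLp_id_gaussianReal 2) (lam * p))
  simp_rw [sub_mul_Jker hlam p]
  exact ((h.comp_sub_right ((1 + lam) / 2 * p)).comp_mul_left' hc).const_mul _

lemma Drift_eq_integral_gaussianReal {lam : ℝ} (hlam : lam ≠ 1) (p : ℝ) :
    Drift lam p = 4 * eta * (1 + lam) / (1 - lam) ^ 3 *
      ∫ v, (v + lam * p) * |v + lam * p| ∂gaussianReal 0 1 := by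
  have hc : 1 - lam ≠ 0 := sub_ne_zero.2 hlam.symm
  let f : ℝ → ℝ := fun v => gauss v * ((v + lam * p) * |v + lam * p|)
  have h_subst : ∫ q, f ((1 - lam) / 2 * q - (1 + lam) / 2 * p) =
      |((1 - lam) / 2)⁻¹| * ∫ v, f v := by
    rw [Measure.integral_comp_mul_left (fun y => f (y - (1 + lam) / 2 * p)),
      integral_sub_right_eq_self f, smul_eq_mul]
  simp only [Drift, sub_mul_Jker hlam p]
  rw [integral_const_mul, h_subst, integral_gauss_mul, ← mul_assoc]
  congr 1
  rw [abs_inv, ← div_eq_mul_inv, div_div, mul_assoc ((1 - lam) / 2), abs_mul_abs_self]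
  field_simp
  ring

lemma abs_Drift_le {lam₀ lam p : ℝ} (hlam₀ : lam₀ < 1) (hpos : 0 < lam) (hlam : lam ≤ lam₀)
    (hp : |p| ≤ lam⁻¹) : |Drift lam p| ≤ 24 * eta / (1 - lam₀) ^ 3 * lam * |p| := by
  have h_eta := eta_pos
  have : 0 < 1 - lam₀ := sub_pos.2 hlam₀
  have h_gap_le : 1 - lam₀ ≤ 1 - lam := by linarith
  have h_abs : |lam * p| = lam * |p| := by rw [abs_mul, abs_of_pos hpos]
  have h_le_one : |lam * p| ≤ 1 := by
    rw [h_abs]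
    exact (le_inv_mul_iff₀ hpos).1 (by simpa using hp)
  have h_coeff : 4 * eta * (1 + lam) / (1 - lam) ^ 3 ≤ 4 * eta * 2 / (1 - lam₀) ^ 3 := by
    gcongr
    linarith
  have h_integral : |∫ v, (v + lam * p) * |v + lam * p| ∂gaussianReal 0 1| ≤ |lam * p| * 3 :=
    (abs_integral_add_mul_abs_add_le (memLp_id_gaussianReal 2) _).trans
      (by gcongr; linarith [integral_abs_gaussianReal_le_one])
  have h_coeff_nonneg : 0 ≤ 4 * eta * (1 + lam) / (1 - lam) ^ 3 :=
    div_nonneg (by positivity) (pow_nonneg (by linarith) 3)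
  calc |Drift lam p|
      = 4 * eta * (1 + lam) / (1 - lam) ^ 3 *
          |∫ v, (v + lam * p) * |v + lam * p| ∂gaussianReal 0 1| := by
        rw [Drift_eq_integral_gaussianReal (hlam.trans_lt hlam₀).ne, abs_mul,
          abs_of_nonneg h_coeff_nonneg]
    _ ≤ 4 * eta * 2 / (1 - lam₀) ^ 3 * (|lam * p| * 3) := by gcongr
    _ = 24 * eta / (1 - lam₀) ^ 3 * lam * |p| := by rw [h_abs]; ring

end Drift

lemma sqrt_two_mul_sqrt_Ham (V : ℝ → ℝ) (x p : ℝ) :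
    √2 * √(Ham V x p) = √(p ^ 2 + 2 * V x) := by
  rw [Ham, ← sqrt_mul zero_le_two]
  ring_nf

lemma neg_Afun_le_abs_Drift {V : ℝ → ℝ} {lam x : ℝ} (hV : 0 ≤ V x) (h_ge : -1 ≤ lam)
    (h_ne : lam ≠ 1) (p : ℝ) : -Afun V lam x p ≤ |Drift lam p| := by
  have hc : 0 ≤ 2 * V x := by positivity
  have h_drift := integrable_sub_mul_Jker h_ne p
  have h_energy : Integrable
      (fun q => (√(q ^ 2 + 2 * V x) - √(p ^ 2 + 2 * V x)) * Jker lam p q) := by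
    refine h_drift.mono ?_ (ae_of_all _ fun q => ?_)
    · have := continuous_Jker lam p
      exact Continuous.aestronglyMeasurable (by fun_prop)
    · rw [norm_mul, norm_mul]
      exact mul_le_mul_of_nonneg_right (abs_sqrt_sq_add_sub_le hc p q) (norm_nonneg _)
  simp only [Afun, sqrt_two_mul_sqrt_Ham]
  refine neg_integral_le_abs_integral_of_mul_le h_drift h_energy
    (abs_div_sqrt_sq_add_le_one hc p) (ae_of_all _ fun q => ?_)
  rw [← mul_assoc]
  exact mul_le_mul_of_nonneg_right (div_sqrt_mul_sub_le_sqrt_sq_add_sub hc p q)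
    (Jker_nonneg h_ge p q)

theorem stmt_15_general {lam₀ : ℝ} (hlam₀ : lam₀ < 1) :
    ∃ C : ℝ, 0 < C ∧ ∀ V : ℝ → ℝ, (∀ x, 0 ≤ V x) →
      ∀ lam : ℝ, 0 < lam → lam < lam₀ → ∀ x p : ℝ,
        max (-(Afun V lam x p)) 0 ≤ |Drift lam p| ∧
        (|p| ≤ lam⁻¹ → max (-(Afun V lam x p)) 0 ≤ C * lam * |p|) := by
  have h_const : 0 < 24 * eta / (1 - lam₀) ^ 3 :=
    div_pos (mul_pos (by norm_num) eta_pos) (pow_pos (sub_pos.2 hlam₀) 3)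
  refine ⟨24 * eta / (1 - lam₀) ^ 3, h_const, fun V hV lam hpos hlam x p => ?_⟩
  have hA : max (-(Afun V lam x p)) 0 ≤ |Drift lam p| :=
    max_le (neg_Afun_le_abs_Drift (hV x) (by linarith) (hlam.trans hlam₀).ne p) (abs_nonneg _)
  exact ⟨hA, fun hp => hA.trans (abs_Drift_le hlam₀ hpos hlam.le hp)⟩

theorem stmt_15 (V : ℝ → ℝ) (hV : ContDiff ℝ 1 V) (hVpos : ∀ x, 0 ≤ V x)
    (hVper : Function.Periodic V 1) :
    ∃ C : ℝ, 0 < C ∧ ∃ lam₀ ∈ Set.Ioc (0 : ℝ) 1,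
      ∀ lam : ℝ, 0 < lam → lam < lam₀ → ∀ x p : ℝ,
        max (-(Afun V lam x p)) 0 ≤ |Drift lam p| ∧
        (|p| ≤ lam⁻¹ → max (-(Afun V lam x p)) 0 ≤ C * lam * |p|) := by
  obtain ⟨C, hC, h⟩ := stmt_15_general one_half_lt_one
  exact ⟨C, hC, 1 / 2, by norm_num, h V hVpos⟩
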